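/- There exists a constant C_p > 0 depending only on p such that, whenever N_n ≤ 1, for every ε > 0, P( |[S]_n − 1| ≥ ε ) ≤ C_p · ε^{−p} · N_n^{(p+1)/(2p+1)}. -/

import Mathlib

open MeasureTheory Filter Finset

/-- The standard normal distribution function
`Φ(x) = (2π)^{-1/2} ∫_{-∞}^x e^{-u²/2} du`. -/
noncomputable def stdNormalCDF (x : ℝ) : ℝ :=
  ∫ u in Set.Iic x, (Real.sqrt (2 * Real.pi))⁻¹ * Real.exp (-u ^ 2 / 2)

/-!
The squared variation `[S]` is an increasing process with compensator `⟨S⟩`, so `[S]_n - 1` is the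
sum of the martingale part `M_n` of `[S]` and of `⟨S⟩_n - 1`. The `p`-th moment of the latter is at
most `N_n`, and Markov's inequality reduces the claim to `E|M_n|^p ≤ K N_n ^ r`.

Expand `|M_{k+1}|^p = |M_k + y|^p` to second order. The linear term has mean zero. For `p ≤ 2` the
remainder is `O(|y|^p)`, and the sum of the `E|y|^p` is `O(N_n)`. For `p ≥ 2` the remainder is
`O(max(|M_{k+1}|, |M_k|)^(p-2) y²)`; according to whether `|y| ≤ l |M_k|` or not, it is at most
`l |M_k|^(p-1) |y|` or `l^(2-p) |y|^p`, up to constants. As `[S]` increases, `E[|y| | ℱ_k]` is at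
most twice the increment of `⟨S⟩`, and `|M|^(p-1)` is a submartingale, so the first terms add up to
at most `2 l E[|M_n|^(p-1) ⟨S⟩_n]`, which Young's inequality absorbs into `E|M_n|^p` at the cost of
`O(l^p)`. Hence `E|M_n|^p = O(l^p + l^(2-p) N_n)` for all `0 < l ≤ 1`, and it remains to choose `l`
as a power of `N_n`.
-/

/-! ### Inequalities for real powers -/

section RealInequalities

variable {p a b l x y : ℝ}

lemma rpow_sub_one_mul_self (hp : p ≠ 0) (ha : 0 ≤ a) : a ^ (p - 1) * a = a ^ p := by
  rw [← Real.rpow_add_one' ha (by simpa using hp), sub_add_cancel]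

lemma rpow_sub_one_mul_le_add (hp : 1 < p) (ha : 0 ≤ a) (hb : 0 ≤ b) :
    a ^ (p - 1) * b ≤ a ^ p + b ^ p := by
  have hp0 : p ≠ 0 := by linarith
  have ha' := Real.rpow_nonneg ha p
  have hb' := Real.rpow_nonneg hb p
  rcases le_total a b with hab | hab
  · calc a ^ (p - 1) * b ≤ b ^ (p - 1) * b := by gcongr
      _ = b ^ p := rpow_sub_one_mul_self hp0 hb
      _ ≤ a ^ p + b ^ p := by linarith
  · calc a ^ (p - 1) * b ≤ a ^ (p - 1) * a := by gcongr
      _ = a ^ p := rpow_sub_one_mul_self hp0 ha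
      _ ≤ a ^ p + b ^ p := by linarith

lemma add_rpow_le_two_rpow_mul_add_rpow (hp : 1 ≤ p) (ha : 0 ≤ a) (hb : 0 ≤ b) :
    (a + b) ^ p ≤ 2 ^ (p - 1) * (a ^ p + b ^ p) := by
  lift a to NNReal using ha
  lift b to NNReal using hb
  exact_mod_cast NNReal.rpow_add_le_mul_rpow_add_rpow a b hp

lemma rpow_sub_rpow_le_mul_sub (hp : 1 ≤ p) (ha : 0 ≤ a) (hb : 0 ≤ b) :
    a ^ p - b ^ p ≤ p * a ^ (p - 1) * (a - b) := by
  have hp0 : p ≠ 0 := by linarith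
  rcases ha.eq_or_lt with rfl | ha
  · have hb' := Real.rpow_nonneg hb p
    rcases hp.eq_or_lt with rfl | hp
    · simp
    · simpa [hp0, sub_ne_zero.2 hp.ne'] using hb'
  have bernoulli : 1 + p * (b / a - 1) ≤ (b / a) ^ p := by
    simpa using one_add_mul_self_le_rpow_one_add (s := b / a - 1)
      (by linarith [div_nonneg hb ha.le]) hp
  rw [Real.div_rpow hb ha.le, le_div_iff₀ (Real.rpow_pos_of_pos ha p),
    ← rpow_sub_one_mul_self hp0 ha.le] at bernoulli
  have : (1 + p * (b / a - 1)) * (a ^ (p - 1) * a)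
      = a ^ (p - 1) * a + p * a ^ (p - 1) * (b - a) := by field_simp
  rw [← rpow_sub_one_mul_self hp0 ha.le]
  linarith

lemma abs_rpow_sub_rpow_mul_le (hp : 1 < p) (hb : 0 ≤ b) (hab : b ≤ a) :
    |a ^ (p - 2) - b ^ (p - 2)| * b ≤ (max 2 p - 1) * (a ^ (p - 2) * (a - b)) := by
  have ha := hb.trans hab
  have hexp : p - 2 = p - 1 - 1 := by ring
  have hpow {c : ℝ} (hc : 0 ≤ c) : c ^ (p - 2) * c = c ^ (p - 1) := by
    rw [hexp, rpow_sub_one_mul_self (by linarith) hc]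
  have ha' := hpow ha
  have hb' := hpow hb
  rcases le_total 2 p with h2 | h2
  · have hmono : b ^ (p - 2) ≤ a ^ (p - 2) := Real.rpow_le_rpow hb hab (by linarith)
    have htangent := rpow_sub_rpow_le_mul_sub (p := p - 1) (by linarith) ha hb
    rw [← hexp] at htangent
    have hcross : a ^ (p - 2) * b ≤ a ^ (p - 2) * a := by gcongr
    rw [abs_of_nonneg (by linarith), max_eq_right h2]
    linarith
  · have hanti : a ^ (p - 2) * b ≤ b ^ (p - 2) * b := by
      rcases hb.eq_or_lt with rfl | hb
      · simp
      · exact mul_le_mul_of_nonneg_right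
          (Real.rpow_le_rpow_of_nonpos hb hab (by linarith)) hb.le
    have hmono : b ^ (p - 1) ≤ a ^ (p - 1) := Real.rpow_le_rpow hb hab (by linarith)
    rw [← abs_of_nonneg hb, ← abs_mul, abs_of_nonneg hb, sub_mul, abs_of_nonpos (by linarith),
      max_eq_left h2]
    linarith

lemma abs_rpow_mul_sub_rpow_mul_le_of_abs_le (hp : 1 < p) (hxy : |y| ≤ |x|) :
    |(|x| ^ (p - 2) * x - |y| ^ (p - 2) * y)| ≤ max 2 p * (|x| ^ (p - 2) * |x - y|) := by
  have hsplit : |x| ^ (p - 2) * x - |y| ^ (p - 2) * y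
      = |x| ^ (p - 2) * (x - y) + (|x| ^ (p - 2) - |y| ^ (p - 2)) * y := by ring
  have hradial := abs_rpow_sub_rpow_mul_le hp (abs_nonneg y) hxy
  have hpow : 0 ≤ |x| ^ (p - 2) := by positivity
  have hmax : 0 ≤ max 2 p - 1 := by linarith [le_max_right 2 p]
  calc |(|x| ^ (p - 2) * x - |y| ^ (p - 2) * y)|
      ≤ |x| ^ (p - 2) * |x - y| + |(|x| ^ (p - 2) - |y| ^ (p - 2))| * |y| := by
        rw [hsplit, ← abs_mul, ← abs_of_nonneg hpow, ← abs_mul, abs_of_nonneg hpow]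
        exact abs_add_le _ _
    _ ≤ |x| ^ (p - 2) * |x - y| + (max 2 p - 1) * (|x| ^ (p - 2) * |x - y|) := by
        grw [hradial, abs_sub_abs_le_abs_sub]
    _ = max 2 p * (|x| ^ (p - 2) * |x - y|) := by ring

lemma abs_rpow_mul_sub_rpow_mul_le (hp : 1 < p) :
    |(|x| ^ (p - 2) * x - |y| ^ (p - 2) * y)| ≤ max 2 p * (max |x| |y| ^ (p - 2) * |x - y|) := by
  rcases le_total |y| |x| with hxy | hxy
  · rw [max_eq_left hxy]
    exact abs_rpow_mul_sub_rpow_mul_le_of_abs_le hp hxy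
  · rw [max_eq_right hxy, abs_sub_comm, abs_sub_comm x]
    exact abs_rpow_mul_sub_rpow_mul_le_of_abs_le hp hxy

lemma abs_rpow_sub_abs_rpow_le (hp : 1 < p) :
    |x| ^ p - |y| ^ p ≤ p * (|x| ^ (p - 2) * x * (x - y)) := by
  have hpow : |x| ^ (p - 2) * |x| = |x| ^ (p - 1) := by
    rw [show p - 2 = p - 1 - 1 by ring, rpow_sub_one_mul_self (by linarith) (abs_nonneg x)]
  calc |x| ^ p - |y| ^ p ≤ p * |x| ^ (p - 1) * (|x| - |y|) :=
        rpow_sub_rpow_le_mul_sub hp.le (abs_nonneg x) (abs_nonneg y)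
    _ = p * (|x| ^ (p - 2) * (x * x - |x| * |y|)) := by rw [← hpow, ← abs_mul_abs_self x]; ring
    _ ≤ p * (|x| ^ (p - 2) * (x * x - x * y)) := by
        have := (le_abs_self (x * y)).trans (abs_mul x y).le
        gcongr
    _ = p * (|x| ^ (p - 2) * x * (x - y)) := by ring

lemma abs_add_rpow_le_taylor (hp : 1 < p) (x y : ℝ) :
    |x + y| ^ p ≤ |x| ^ p + p * (|x| ^ (p - 2) * x * y)
      + p * max 2 p * (max |x + y| |x| ^ (p - 2) * y ^ 2) := by
  have htangent := abs_rpow_sub_abs_rpow_le hp (x := x + y) (y := x)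
  have hincr := abs_rpow_mul_sub_rpow_mul_le hp (x := x + y) (y := x)
  rw [add_sub_cancel_left] at htangent hincr
  have hquad : (|x + y| ^ (p - 2) * (x + y) - |x| ^ (p - 2) * x) * y
      ≤ max 2 p * (max |x + y| |x| ^ (p - 2) * y ^ 2) :=
    calc _ ≤ |(|x + y| ^ (p - 2) * (x + y) - |x| ^ (p - 2) * x)| * |y| :=
          (le_abs_self _).trans (abs_mul _ _).le
      _ ≤ max 2 p * (max |x + y| |x| ^ (p - 2) * |y|) * |y| := by gcongr
      _ = max 2 p * (max |x + y| |x| ^ (p - 2) * y ^ 2) := by rw [← sq_abs y]; ring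
  have := mul_le_mul_of_nonneg_left hquad (by linarith : 0 ≤ p)
  linarith

lemma abs_le_two_mul_max_abs_add : |y| ≤ 2 * max |x + y| |x| := by
  have h := abs_sub (x + y) x
  rw [add_sub_cancel_left] at h
  linarith [le_max_left |x + y| |x|, le_max_right |x + y| |x|]

lemma abs_rpow_sub_two_mul_sq (hp : p ≠ 0) (y : ℝ) : |y| ^ (p - 2) * y ^ 2 = |y| ^ p := by
  rw [← sq_abs, ← Real.rpow_natCast, ← Real.rpow_add' (abs_nonneg y) (by simpa using hp)]
  simp

lemma abs_add_rpow_le_of_le_two (hp : 1 < p) (hp2 : p ≤ 2) (x y : ℝ) :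
    |x + y| ^ p ≤ |x| ^ p + p * (|x| ^ (p - 2) * x * y) + 4 * p * |y| ^ p := by
  suffices hquad : max |x + y| |x| ^ (p - 2) * y ^ 2 ≤ 2 * |y| ^ p by
    have htaylor := abs_add_rpow_le_taylor hp x y
    rw [max_eq_left hp2] at htaylor
    have := mul_le_mul_of_nonneg_left hquad (by linarith : 0 ≤ p * 2)
    linarith
  rcases eq_or_ne y 0 with rfl | hy
  · simp [show p ≠ 0 by linarith]
  have hp0 : p ≠ 0 := by linarith
  have hy' : 0 < |y| / 2 := by positivity
  calc max |x + y| |x| ^ (p - 2) * y ^ 2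
      ≤ (|y| / 2) ^ (p - 2) * y ^ 2 := by
        gcongr ?_ * _
        exact Real.rpow_le_rpow_of_nonpos hy'
          (by linarith [abs_le_two_mul_max_abs_add (x := x) (y := y)]) (by linarith)
    _ = 2 ^ (2 - p) * |y| ^ p := by
        rw [Real.div_rpow (abs_nonneg y) two_pos.le, ← neg_sub 2 p, Real.rpow_neg two_pos.le,
          div_inv_eq_mul, neg_sub, ← abs_rpow_sub_two_mul_sq hp0 y]
        ring
    _ ≤ 2 * |y| ^ p := by
        gcongr
        exact (Real.rpow_le_rpow_of_exponent_le one_le_two (by linarith)).trans_eq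
          (Real.rpow_one 2)

lemma max_rpow_mul_sq_le (hp : 2 ≤ p) (hl : 0 < l) (hl1 : l ≤ 1) :
    max |x + y| |x| ^ (p - 2) * y ^ 2
      ≤ 2 ^ (p - 2) * (l * (|x| ^ (p - 1) * |y|) + l ^ (2 - p) * |y| ^ p) := by
  have hp0 : p ≠ 0 := by linarith
  have hfst : 0 ≤ l * (|x| ^ (p - 1) * |y|) := by positivity
  have hsnd : 0 ≤ l ^ (2 - p) * |y| ^ p := by positivity
  have htri := abs_add_le x y
  rcases le_total |y| (l * |x|) with hyx | hyx
  · have hmax : max |x + y| |x| ≤ 2 * |x| := by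
      have := mul_le_of_le_one_left (abs_nonneg x) hl1
      exact max_le (by linarith) (by linarith [abs_nonneg x])
    calc max |x + y| |x| ^ (p - 2) * y ^ 2
        ≤ (2 * |x|) ^ (p - 2) * (l * |x| * |y|) := by
          rw [← sq_abs, sq]
          gcongr
      _ = 2 ^ (p - 2) * (l * (|x| ^ (p - 1) * |y|)) := by
          rw [Real.mul_rpow two_pos.le (abs_nonneg x),
            ← rpow_sub_one_mul_self (p := p - 1) (by linarith) (abs_nonneg x),
            show p - 1 - 1 = p - 2 by ring]
          ring
      _ ≤ _ := by gcongr; linarith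
  · have hxl : |x| ≤ |y| / l := by rwa [le_div_iff₀' hl]
    have hyl : |y| ≤ |y| / l := le_div_self (abs_nonneg y) hl hl1
    have hmax : max |x + y| |x| ≤ 2 * |y| / l := by
      rw [mul_div_assoc]
      exact max_le (by linarith) (by linarith [abs_nonneg x])
    calc max |x + y| |x| ^ (p - 2) * y ^ 2
        ≤ (2 * |y| / l) ^ (p - 2) * y ^ 2 := by gcongr
      _ = 2 ^ (p - 2) * (l ^ (2 - p) * |y| ^ p) := by
          rw [Real.div_rpow (by positivity) hl.le, Real.mul_rpow two_pos.le (abs_nonneg y),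
            ← neg_sub p 2, Real.rpow_neg hl.le, ← abs_rpow_sub_two_mul_sq hp0 y]
          ring
      _ ≤ _ := by gcongr; linarith

lemma abs_add_rpow_le_of_two_le (hp : 2 ≤ p) (hl : 0 < l) (hl1 : l ≤ 1) (x y : ℝ) :
    |x + y| ^ p ≤ |x| ^ p + p * (|x| ^ (p - 2) * x * y)
      + p ^ 2 * 2 ^ (p - 2) * l * (|x| ^ (p - 1) * |y|)
      + p ^ 2 * 2 ^ (p - 2) * l ^ (2 - p) * |y| ^ p := by
  have htaylor := abs_add_rpow_le_taylor (one_lt_two.trans_le hp) x y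
  rw [max_eq_right hp] at htaylor
  have := mul_le_mul_of_nonneg_left (max_rpow_mul_sq_le (x := x) (y := y) hp hl hl1)
    (by positivity : 0 ≤ p * p)
  linarith

end RealInequalities

/-! ### Moments and conditional expectations -/

section Moments

variable {Ω : Type*} {m m0 : MeasurableSpace Ω} {μ : Measure Ω} {p : ℝ} {f g : Ω → ℝ}

lemma integrable_abs_rpow_of_memLp (hp : 0 < p) (hf : MemLp f (ENNReal.ofReal p) μ) :
    Integrable (fun ω => |f ω| ^ p) μ := by
  simpa only [ENNReal.toReal_ofReal hp.le, Real.norm_eq_abs]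
    using hf.integrable_norm_rpow (by simpa using hp) ENNReal.ofReal_ne_top

lemma integrable_mul_of_abs_le_abs_rpow_sub_one {h : Ω → ℝ} (hp : 1 < p)
    (hf : MemLp f (ENNReal.ofReal p) μ) (hg : MemLp g (ENNReal.ofReal p) μ)
    (hh : AEStronglyMeasurable h μ) (hhf : ∀ ω, |h ω| ≤ |f ω| ^ (p - 1)) :
    Integrable (fun ω => h ω * g ω) μ := by
  have hp0 := zero_lt_one.trans hp
  refine ((integrable_abs_rpow_of_memLp hp0 hf).add
    (integrable_abs_rpow_of_memLp hp0 hg)).mono' (hh.mul hg.1) (ae_of_all _ fun ω => ?_)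
  calc ‖h ω * g ω‖ ≤ |f ω| ^ (p - 1) * |g ω| := by
        rw [Real.norm_eq_abs, abs_mul]
        gcongr
        exact hhf ω
    _ ≤ |f ω| ^ p + |g ω| ^ p := rpow_sub_one_mul_le_add hp (abs_nonneg _) (abs_nonneg _)

lemma integrable_abs_rpow_sub_one_mul (hp : 1 < p)
    (hf : MemLp f (ENNReal.ofReal p) μ) (hg : MemLp g (ENNReal.ofReal p) μ) :
    Integrable (fun ω => |f ω| ^ (p - 1) * g ω) μ :=
  integrable_mul_of_abs_le_abs_rpow_sub_one hp hf hg
    (hf.1.aemeasurable.abs.pow_const (p - 1)).aestronglyMeasurable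
    fun _ => (abs_of_nonneg (by positivity)).le

lemma integrable_abs_rpow_sub_two_mul_mul (hp : 1 < p)
    (hf : MemLp f (ENNReal.ofReal p) μ) (hg : MemLp g (ENNReal.ofReal p) μ) :
    Integrable (fun ω => |f ω| ^ (p - 2) * f ω * g ω) μ := by
  have hfm := hf.1.aemeasurable
  refine integrable_mul_of_abs_le_abs_rpow_sub_one hp hf hg
    ((hfm.abs.pow_const (p - 2)).mul hfm).aestronglyMeasurable fun ω => ?_
  rw [abs_mul, abs_of_nonneg (by positivity : 0 ≤ |f ω| ^ (p - 2)), show p - 2 = p - 1 - 1 by ring,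
    rpow_sub_one_mul_self (by linarith) (abs_nonneg _)]

lemma integral_mul_rpow_sub_one_le {a : ℝ} (hp : 1 < p) (ha : 0 ≤ a)
    (hf : MemLp f (ENNReal.ofReal p) μ) (hg : MemLp g (ENNReal.ofReal p) μ) :
    a * ∫ ω, |f ω| ^ (p - 1) * g ω ∂μ ≤ ∫ ω, |f ω| ^ p ∂μ + a ^ p * ∫ ω, |g ω| ^ p ∂μ := by
  have hp0 := zero_lt_one.trans hp
  have hfp := integrable_abs_rpow_of_memLp hp0 hf
  have hgp := (integrable_abs_rpow_of_memLp hp0 hg).const_mul (a ^ p)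
  rw [← integral_const_mul, ← integral_const_mul, ← integral_add hfp hgp]
  refine integral_mono ((integrable_abs_rpow_sub_one_mul hp hf hg).const_mul a)
    (hfp.add hgp) fun ω => ?_
  calc a * (|f ω| ^ (p - 1) * g ω) ≤ |f ω| ^ (p - 1) * (a * |g ω|) := by
        rw [mul_left_comm]
        gcongr
        exact le_abs_self _
    _ ≤ |f ω| ^ p + (a * |g ω|) ^ p :=
        rpow_sub_one_mul_le_add hp (abs_nonneg _) (by positivity)
    _ = |f ω| ^ p + a ^ p * |g ω| ^ p := by rw [Real.mul_rpow ha (abs_nonneg _)]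

lemma integral_abs_add_rpow_le_two_rpow_mul (hp : 1 ≤ p) (hf : MemLp f (ENNReal.ofReal p) μ)
    (hg : MemLp g (ENNReal.ofReal p) μ) :
    ∫ ω, |f ω + g ω| ^ p ∂μ ≤ 2 ^ (p - 1) * (∫ ω, |f ω| ^ p ∂μ + ∫ ω, |g ω| ^ p ∂μ) := by
  have hp0 := zero_lt_one.trans_le hp
  have hfp := integrable_abs_rpow_of_memLp hp0 hf
  have hgp := integrable_abs_rpow_of_memLp hp0 hg
  rw [← integral_add hfp hgp, ← integral_const_mul]
  exact integral_mono (integrable_abs_rpow_of_memLp hp0 (hf.add hg)) ((hfp.add hgp).const_mul _)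
    fun ω => (Real.rpow_le_rpow (abs_nonneg _) (abs_add_le _ _) hp0.le).trans
      (add_rpow_le_two_rpow_mul_add_rpow hp (abs_nonneg _) (abs_nonneg _))

lemma integral_abs_sub_condExp_rpow_le (hp : 1 ≤ p) (hf : MemLp f (ENNReal.ofReal p) μ) :
    ∫ ω, |f ω - μ[f | m] ω| ^ p ∂μ ≤ 2 ^ p * ∫ ω, |f ω| ^ p ∂μ := by
  have hp0 := zero_lt_one.trans_le hp
  have hcond : MemLp (μ[f | m]) (ENNReal.ofReal p) μ := hf.condExp (by simpa using hp)
  have hjensen : ∫ ω, |μ[f | m] ω| ^ p ∂μ ≤ ∫ ω, |f ω| ^ p ∂μ :=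
    integral_norm_condExp_rpow_le (f := f) hp (integrable_abs_rpow_of_memLp hp0 hf)
  calc ∫ ω, |f ω - μ[f | m] ω| ^ p ∂μ
      ≤ 2 ^ (p - 1) * (∫ ω, |f ω| ^ p ∂μ + ∫ ω, |μ[f | m] ω| ^ p ∂μ) := by
        simpa only [Pi.neg_apply, abs_neg, ← sub_eq_add_neg]
          using integral_abs_add_rpow_le_two_rpow_mul hp hf hcond.neg
    _ ≤ 2 ^ (p - 1) * (∫ ω, |f ω| ^ p ∂μ + ∫ ω, |f ω| ^ p ∂μ) := by gcongr
    _ = 2 ^ p * ∫ ω, |f ω| ^ p ∂μ := by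
        rw [← rpow_sub_one_mul_self hp0.ne' two_pos.le]
        ring

lemma measureReal_le_abs_le_rpow_neg_mul_integral {ε : ℝ} (hp : 0 < p) (hε : 0 < ε)
    (hf : MemLp f (ENNReal.ofReal p) μ) :
    μ.real {ω | ε ≤ |f ω|} ≤ ε ^ (-p) * ∫ ω, |f ω| ^ p ∂μ := by
  have hmarkov := mul_meas_ge_le_integral_of_nonneg (ae_of_all μ fun ω => by positivity)
    (integrable_abs_rpow_of_memLp hp hf) (ε ^ p)
  simp only [Real.rpow_le_rpow_iff hε.le (abs_nonneg _) hp] at hmarkov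
  rwa [Real.rpow_neg hε.le, le_inv_mul_iff₀ (by positivity)]

section PullOut

variable {w : Ω → ℝ} (hw : StronglyMeasurable[m] w) (hwf : Integrable (fun ω => w ω * f ω) μ)
  (hf : Integrable f μ)

include hw hwf hf

lemma integrable_mul_condExp : Integrable (fun ω => w ω * μ[f | m] ω) μ :=
  integrable_condExp.congr (condExp_mul_of_stronglyMeasurable_left hw hwf hf)

lemma integral_mul_condExp (hm : m ≤ m0) [SigmaFinite (μ.trim hm)] :
    ∫ ω, w ω * μ[f | m] ω ∂μ = ∫ ω, w ω * f ω ∂μ :=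
  calc ∫ ω, w ω * μ[f | m] ω ∂μ = ∫ ω, μ[w * f | m] ω ∂μ :=
        integral_congr_ae (condExp_mul_of_stronglyMeasurable_left hw hwf hf).symm
    _ = ∫ ω, w ω * f ω ∂μ := integral_condExp hm

end PullOut

lemma integral_mul_abs_sub_condExp_le {w : Ω → ℝ} (hm : m ≤ m0) [SigmaFinite (μ.trim hm)]
    (hw : StronglyMeasurable[m] w) (hw0 : 0 ≤ w) (hf : Integrable f μ) (hf0 : 0 ≤ᵐ[μ] f)
    (hwf : Integrable (fun ω => w ω * f ω) μ) :
    ∫ ω, w ω * |f ω - μ[f | m] ω| ∂μ ≤ 2 * ∫ ω, w ω * μ[f | m] ω ∂μ := by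
  have hwc := integrable_mul_condExp hw hwf hf
  calc ∫ ω, w ω * |f ω - μ[f | m] ω| ∂μ ≤ ∫ ω, w ω * f ω + w ω * μ[f | m] ω ∂μ := by
        refine integral_mono_of_nonneg (ae_of_all _ fun ω => mul_nonneg (hw0 ω) (abs_nonneg _))
          (hwf.add hwc) ?_
        filter_upwards [hf0, condExp_nonneg (m := m) hf0] with ω hfω hcω
        rw [← mul_add]
        refine mul_le_mul_of_nonneg_left ((abs_sub _ _).trans_eq ?_) (hw0 ω)
        rw [abs_of_nonneg hfω, abs_of_nonneg hcω]
    _ = 2 * ∫ ω, w ω * μ[f | m] ω ∂μ := by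
        rw [integral_add hwf hwc, ← integral_mul_condExp hw hwf hf hm, two_mul]

variable [IsFiniteMeasure μ]

lemma integral_abs_rpow_sub_two_mul_mul_eq_zero (hm : m ≤ m0) (hp : 1 < p)
    (hf : MemLp f (ENNReal.ofReal p) μ) (hg : MemLp g (ENNReal.ofReal p) μ)
    (hfm : StronglyMeasurable[m] f) (hgm : μ[g | m] =ᵐ[μ] 0) :
    ∫ ω, |f ω| ^ (p - 2) * f ω * g ω ∂μ = 0 := by
  have hmeas : Measurable fun x : ℝ => |x| ^ (p - 2) * x := by fun_prop
  have hw : StronglyMeasurable[m] fun ω => |f ω| ^ (p - 2) * f ω :=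
    hmeas.stronglyMeasurable.comp_measurable hfm.measurable
  rw [← integral_mul_condExp hw (integrable_abs_rpow_sub_two_mul_mul hp hf hg)
    (hg.integrable (by simpa using hp.le)) hm]
  refine integral_eq_zero_of_ae ?_
  filter_upwards [hgm] with ω hω
  simp [hω]

lemma integral_abs_add_rpow_le {b c d : ℝ} (hm : m ≤ m0) (hp : 1 < p)
    (hpow : ∀ x y : ℝ, |x + y| ^ p
      ≤ |x| ^ p + b * (|x| ^ (p - 2) * x * y) + c * (|x| ^ (p - 1) * |y|) + d * |y| ^ p)
    (hf : MemLp f (ENNReal.ofReal p) μ) (hg : MemLp g (ENNReal.ofReal p) μ)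
    (hfm : StronglyMeasurable[m] f) (hgm : μ[g | m] =ᵐ[μ] 0) :
    ∫ ω, |f ω + g ω| ^ p ∂μ ≤ ∫ ω, |f ω| ^ p ∂μ
      + (c * ∫ ω, |f ω| ^ (p - 1) * |g ω| ∂μ + d * ∫ ω, |g ω| ^ p ∂μ) := by
  have hp0 := zero_lt_one.trans hp
  have hfp := integrable_abs_rpow_of_memLp hp0 hf
  have hgp := integrable_abs_rpow_of_memLp hp0 hg
  have hlin := integrable_abs_rpow_sub_two_mul_mul hp hf hg
  have hcross : Integrable (fun ω => |f ω| ^ (p - 1) * |g ω|) μ :=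
    integrable_abs_rpow_sub_one_mul hp hf hg.abs
  calc ∫ ω, |f ω + g ω| ^ p ∂μ
      ≤ ∫ ω, |f ω| ^ p + b * (|f ω| ^ (p - 2) * f ω * g ω)
          + c * (|f ω| ^ (p - 1) * |g ω|) + d * |g ω| ^ p ∂μ :=
        integral_mono (integrable_abs_rpow_of_memLp hp0 (hf.add hg))
          (by fun_prop) fun ω => hpow (f ω) (g ω)
    _ = _ := by
        rw [integral_add (by fun_prop) (by fun_prop), integral_add (by fun_prop) (by fun_prop),
          integral_add (by fun_prop) (by fun_prop), integral_const_mul, integral_const_mul,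
          integral_const_mul,
          integral_abs_rpow_sub_two_mul_mul_eq_zero hm hp hf hg hfm hgm]
        ring

end Moments

section Martingale

variable {Ω : Type*} {m0 : MeasurableSpace Ω} {μ : Measure Ω}
  {ℱ : Filtration ℕ m0} {M : ℕ → Ω → ℝ} {p : ℝ}

lemma condExp_martingale_increment (hM : Martingale M ℱ μ) (k : ℕ) :
    μ[M (k + 1) - M k | ℱ k] =ᵐ[μ] 0 := by
  filter_upwards [condExp_sub (hM.integrable (k + 1)) (hM.integrable k) (ℱ k),
    hM.condExp_ae_eq k.le_succ, hM.condExp_ae_eq (le_refl k)] with ω hsub hsucc hself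
  simp [hsub, hsucc, hself]

variable [IsFiniteMeasure μ]

lemma integral_abs_martingale_rpow_le {b c d : ℝ} (hp : 1 < p)
    (hpow : ∀ x y : ℝ, |x + y| ^ p
      ≤ |x| ^ p + b * (|x| ^ (p - 2) * x * y) + c * (|x| ^ (p - 1) * |y|) + d * |y| ^ p)
    (hM : Martingale M ℱ μ) (hMp : ∀ k, MemLp (M k) (ENNReal.ofReal p) μ) (n : ℕ) :
    ∫ ω, |M n ω| ^ p ∂μ ≤ ∫ ω, |M 0 ω| ^ p ∂μ
      + ∑ k ∈ range n, (c * ∫ ω, |M k ω| ^ (p - 1) * |M (k + 1) ω - M k ω| ∂μ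
        + d * ∫ ω, |M (k + 1) ω - M k ω| ^ p ∂μ) := by
  induction n with
  | zero => simp
  | succ n ih =>
    have hstep := integral_abs_add_rpow_le (ℱ.le n) hp hpow (hMp n) ((hMp (n + 1)).sub (hMp n))
      (hM.stronglyAdapted n) (condExp_martingale_increment hM n)
    simp only [Pi.sub_apply, add_sub_cancel] at hstep
    rw [sum_range_succ]
    linarith

lemma integral_abs_martingale_rpow_mul_mono {q : ℝ} {w : Ω → ℝ} {i j : ℕ} (hq : 1 ≤ q)
    (hM : Martingale M ℱ μ) (hij : i ≤ j) (hMq : Integrable (fun ω => |M j ω| ^ q) μ)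
    (hw : StronglyMeasurable[ℱ i] w) (hw0 : 0 ≤ᵐ[μ] w)
    (hMw : Integrable (fun ω => |M j ω| ^ q * w ω) μ) :
    ∫ ω, |M i ω| ^ q * w ω ∂μ ≤ ∫ ω, |M j ω| ^ q * w ω ∂μ := by
  have hwM : Integrable (fun ω => w ω * |M j ω| ^ q) μ := by simpa only [mul_comm] using hMw
  have hjensen : (fun ω => |M i ω| ^ q) ≤ᵐ[μ] μ[fun ω => |M j ω| ^ q | ℱ i] := by
    filter_upwards [Integrable.norm_condExp_rpow_le (f := M j) (m := ℱ i) hq hMq,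
      hM.condExp_ae_eq hij]
      with ω hω hMω
    rwa [hMω] at hω
  calc ∫ ω, |M i ω| ^ q * w ω ∂μ ≤ ∫ ω, w ω * μ[fun ω => |M j ω| ^ q | ℱ i] ω ∂μ := by
        refine integral_mono_of_nonneg ?_ (integrable_mul_condExp hw hwM hMq) ?_
        · filter_upwards [hw0] with ω hω using mul_nonneg (by positivity) hω
        · filter_upwards [hw0, hjensen] with ω hω hjω
          rw [mul_comm]
          exact mul_le_mul_of_nonneg_left hjω hω
    _ = ∫ ω, w ω * |M j ω| ^ q ∂μ := integral_mul_condExp hw hwM hMq (ℱ.le i)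
    _ = ∫ ω, |M j ω| ^ q * w ω ∂μ := by simp only [mul_comm]

end Martingale

/-! ### The Doob decomposition of an increasing process -/

section DoobDecomposition

variable {Ω : Type*} {m0 : MeasurableSpace Ω} {μ : Measure Ω} {ℱ : Filtration ℕ m0}
  {f : ℕ → Ω → ℝ} {p : ℝ}

lemma memLp_predictablePart {q : ENNReal} (hq : 1 ≤ q) (hf : ∀ k, MemLp (f k) q μ) (n : ℕ) :
    MemLp (predictablePart f ℱ μ n) q μ :=
  memLp_finsetSum' _ fun k _ => ((hf (k + 1)).sub (hf k)).condExp hq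

lemma memLp_martingalePart {q : ENNReal} (hq : 1 ≤ q) (hf : ∀ k, MemLp (f k) q μ) (n : ℕ) :
    MemLp (martingalePart f ℱ μ n) q μ :=
  (hf n).sub (memLp_predictablePart hq hf n)

lemma martingalePart_add_one_sub (k : ℕ) :
    martingalePart f ℱ μ (k + 1) - martingalePart f ℱ μ k
      = f (k + 1) - f k - μ[f (k + 1) - f k | ℱ k] := by
  rw [martingalePart, martingalePart, predictablePart_add_one]
  abel

lemma sum_integral_abs_martingalePart_increment_rpow_le (hp : 1 ≤ p)
    (hfp : ∀ k, MemLp (f k) (ENNReal.ofReal p) μ) (n : ℕ) :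
    ∑ k ∈ range n, ∫ ω, |martingalePart f ℱ μ (k + 1) ω - martingalePart f ℱ μ k ω| ^ p ∂μ
      ≤ 2 ^ p * ∑ k ∈ range n, ∫ ω, |f (k + 1) ω - f k ω| ^ p ∂μ := by
  simp only [← Pi.sub_apply, martingalePart_add_one_sub, mul_sum]
  exact sum_le_sum fun k _ => integral_abs_sub_condExp_rpow_le hp ((hfp (k + 1)).sub (hfp k))

variable [IsFiniteMeasure μ]

lemma martingale_martingalePart_of_memLp {q : ENNReal} (hq : 1 ≤ q) (hf : StronglyAdapted ℱ f)
    (hfq : ∀ k, MemLp (f k) q μ) : Martingale (martingalePart f ℱ μ) ℱ μ :=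
  martingale_martingalePart hf fun k => (hfq k).integrable hq

lemma integral_abs_martingalePart_rpow_le_of_le_two (hp : 1 < p) (hp2 : p ≤ 2)
    (hf : StronglyAdapted ℱ f) (hfp : ∀ k, MemLp (f k) (ENNReal.ofReal p) μ) (hf0 : f 0 = 0)
    (n : ℕ) :
    ∫ ω, |martingalePart f ℱ μ n ω| ^ p ∂μ
      ≤ 4 * p * 2 ^ p * ∑ k ∈ range n, ∫ ω, |f (k + 1) ω - f k ω| ^ p ∂μ := by
  have hp1 : 1 ≤ ENNReal.ofReal p := by simpa using hp.le
  have hmart := integral_abs_martingale_rpow_le (c := 0) hp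
    (fun x y => by simpa using abs_add_rpow_le_of_le_two hp hp2 x y)
    (martingale_martingalePart_of_memLp hp1 hf hfp) (memLp_martingalePart hp1 hfp) n
  simp only [martingalePart_zero, hf0, Pi.zero_apply, abs_zero,
    Real.zero_rpow (zero_lt_one.trans hp).ne', integral_zero, zero_mul, zero_add,
    ← mul_sum] at hmart
  grw [hmart, sum_integral_abs_martingalePart_increment_rpow_le hp.le hfp n]
  exact (mul_assoc _ _ _).ge

lemma integral_abs_martingalePart_rpow_mul_increment_le (hp : 2 ≤ p) (hf : StronglyAdapted ℱ f)
    (hfp : ∀ k, MemLp (f k) (ENNReal.ofReal p) μ) (hmono : ∀ k, f k ≤ᵐ[μ] f (k + 1))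
    {k n : ℕ} (hkn : k ≤ n) :
    ∫ ω, |martingalePart f ℱ μ k ω| ^ (p - 1)
        * |martingalePart f ℱ μ (k + 1) ω - martingalePart f ℱ μ k ω| ∂μ
      ≤ 2 * ∫ ω, |martingalePart f ℱ μ n ω| ^ (p - 1) * μ[f (k + 1) - f k | ℱ k] ω ∂μ := by
  have hp1 : 1 < p := one_lt_two.trans_le hp
  have hq : 1 ≤ ENNReal.ofReal p := by simpa using hp1.le
  have hM := martingale_martingalePart_of_memLp hq hf hfp
  have hMp := memLp_martingalePart (ℱ := ℱ) hq hfp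
  have hinc := (hfp (k + 1)).sub (hfp k)
  have hinc0 : 0 ≤ᵐ[μ] f (k + 1) - f k := by
    filter_upwards [hmono k] with ω hω using sub_nonneg.2 hω
  have hpow : StronglyMeasurable[ℱ k] fun ω => |martingalePart f ℱ μ k ω| ^ (p - 1) := by
    have hmeas : Measurable fun x : ℝ => |x| ^ (p - 1) := by fun_prop
    exact hmeas.stronglyMeasurable.comp_measurable (hM.stronglyAdapted k).measurable
  have hMint : Integrable (fun ω => |martingalePart f ℱ μ n ω| ^ (p - 1)) μ := by
    simpa using integrable_abs_rpow_sub_one_mul hp1 (hMp n) (memLp_const (1 : ℝ))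
  calc _ ≤ 2 * ∫ ω, |martingalePart f ℱ μ k ω| ^ (p - 1) * μ[f (k + 1) - f k | ℱ k] ω ∂μ := by
        simp only [← Pi.sub_apply, martingalePart_add_one_sub]
        exact integral_mul_abs_sub_condExp_le (ℱ.le k) hpow (fun ω => by positivity)
          (hinc.integrable hq) hinc0 (integrable_abs_rpow_sub_one_mul hp1 (hMp k) hinc)
    _ ≤ _ := by
        gcongr 2 * ?_
        exact integral_abs_martingale_rpow_mul_mono (by linarith) hM hkn hMint
          stronglyMeasurable_condExp (condExp_nonneg hinc0)
          (integrable_abs_rpow_sub_one_mul hp1 (hMp n) (hinc.condExp hq))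

lemma sum_integral_abs_martingalePart_rpow_mul_increment_le (hp : 2 ≤ p)
    (hf : StronglyAdapted ℱ f) (hfp : ∀ k, MemLp (f k) (ENNReal.ofReal p) μ)
    (hmono : ∀ k, f k ≤ᵐ[μ] f (k + 1)) (n : ℕ) :
    ∑ k ∈ range n, ∫ ω, |martingalePart f ℱ μ k ω| ^ (p - 1)
        * |martingalePart f ℱ μ (k + 1) ω - martingalePart f ℱ μ k ω| ∂μ
      ≤ 2 * ∫ ω, |martingalePart f ℱ μ n ω| ^ (p - 1) * predictablePart f ℱ μ n ω ∂μ := by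
  have hp1 : 1 < p := one_lt_two.trans_le hp
  have hq : 1 ≤ ENNReal.ofReal p := by simpa using hp1.le
  calc _ ≤ ∑ k ∈ range n, 2 * ∫ ω, |martingalePart f ℱ μ n ω| ^ (p - 1)
          * μ[f (k + 1) - f k | ℱ k] ω ∂μ :=
        sum_le_sum fun k hk => integral_abs_martingalePart_rpow_mul_increment_le hp hf hfp hmono
          (mem_range.1 hk).le
    _ = _ := by
        rw [← mul_sum, ← integral_finsetSum]
        · simp only [predictablePart, Finset.sum_apply, mul_sum]
        · exact fun k _ => integrable_abs_rpow_sub_one_mul hp1 (memLp_martingalePart hq hfp n)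
            (((hfp (k + 1)).sub (hfp k)).condExp hq)

lemma integral_abs_martingalePart_rpow_le_cross {l : ℝ} (hp : 2 ≤ p) (hl : 0 < l) (hl1 : l ≤ 1)
    (hf : StronglyAdapted ℱ f) (hfp : ∀ k, MemLp (f k) (ENNReal.ofReal p) μ) (hf0 : f 0 = 0)
    (hmono : ∀ k, f k ≤ᵐ[μ] f (k + 1)) (n : ℕ) :
    ∫ ω, |martingalePart f ℱ μ n ω| ^ p ∂μ
      ≤ p ^ 2 * 2 ^ (p - 2) * l *
          (2 * ∫ ω, |martingalePart f ℱ μ n ω| ^ (p - 1) * predictablePart f ℱ μ n ω ∂μ)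
        + p ^ 2 * 2 ^ (p - 2) * l ^ (2 - p)
          * (2 ^ p * ∑ k ∈ range n, ∫ ω, |f (k + 1) ω - f k ω| ^ p ∂μ) := by
  have hp1 : 1 < p := one_lt_two.trans_le hp
  have hq : 1 ≤ ENNReal.ofReal p := by simpa using hp1.le
  have hmart := integral_abs_martingale_rpow_le hp1 (abs_add_rpow_le_of_two_le hp hl hl1)
    (martingale_martingalePart_of_memLp hq hf hfp) (memLp_martingalePart hq hfp) n
  simp only [martingalePart_zero, hf0, Pi.zero_apply, abs_zero,
    Real.zero_rpow (zero_lt_one.trans hp1).ne', integral_zero, zero_add, sum_add_distrib,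
    ← mul_sum] at hmart
  grw [hmart, sum_integral_abs_martingalePart_rpow_mul_increment_le hp hf hfp hmono n,
    sum_integral_abs_martingalePart_increment_rpow_le hp1.le hfp n]

lemma integral_abs_martingalePart_rpow_le_of_two_le {l : ℝ} (hp : 2 ≤ p) (hl : 0 < l)
    (hl1 : l ≤ 1) (hf : StronglyAdapted ℱ f) (hfp : ∀ k, MemLp (f k) (ENNReal.ofReal p) μ)
    (hf0 : f 0 = 0) (hmono : ∀ k, f k ≤ᵐ[μ] f (k + 1)) (n : ℕ) :
    ∫ ω, |martingalePart f ℱ μ n ω| ^ p ∂μ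
      ≤ (4 * (p ^ 2 * 2 ^ (p - 2))) ^ p * (∫ ω, |predictablePart f ℱ μ n ω| ^ p ∂μ) * l ^ p
        + 2 * (p ^ 2 * 2 ^ (p - 2) * 2 ^ p) * l ^ (2 - p)
          * ∑ k ∈ range n, ∫ ω, |f (k + 1) ω - f k ω| ^ p ∂μ := by
  have hp1 : 1 < p := one_lt_two.trans_le hp
  have hq : 1 ≤ ENNReal.ofReal p := by simpa using hp1.le
  have hcross := integral_abs_martingalePart_rpow_le_cross hp hl hl1 hf hfp hf0 hmono n
  have hyoung := integral_mul_rpow_sub_one_le (a := 4 * (p ^ 2 * 2 ^ (p - 2)) * l) hp1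
    (by positivity) (memLp_martingalePart (ℱ := ℱ) hq hfp n)
    (memLp_predictablePart (ℱ := ℱ) hq hfp n)
  rw [Real.mul_rpow (by positivity) hl.le] at hyoung
  linarith

end DoobDecomposition

/-! ### Processes with nearly deterministic compensator -/

section Optimisation

variable {p r N : ℝ}

lemma le_rpow_of_le_one (hr : 0 ≤ r) (hr1 : r ≤ 1) (hN : 0 ≤ N) (hN1 : N ≤ 1) : N ≤ N ^ r := by
  simpa using Real.rpow_le_rpow_of_exponent_ge' hN hN1 hr hr1

lemma nonpos_of_forall_le_mul_rpow {a B : ℝ} (hp : 0 < p)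
    (h : ∀ l, 0 < l → l ≤ 1 → B ≤ a * l ^ p) : B ≤ 0 := by
  have hlim : Tendsto (fun l : ℝ => a * l ^ p) (nhdsWithin 0 (Set.Ioi 0)) (nhds 0) := by
    have hcont : ContinuousAt (fun l : ℝ => a * l ^ p) 0 :=
      continuousAt_const.mul (Real.continuousAt_rpow_const 0 p (Or.inr hp.le))
    simpa [Real.zero_rpow hp.ne'] using hcont.tendsto.mono_left nhdsWithin_le_nhds
  refine ge_of_tendsto hlim ?_
  filter_upwards [Ioc_mem_nhdsGT one_pos] with l hl using h l hl.1 hl.2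

lemma le_add_mul_rpow_of_forall_le {a b B : ℝ} (hp : 2 ≤ p) (hb : 0 ≤ b) (hr : 0 ≤ r)
    (hrp : r * (2 * p - 2) ≤ p) (ha : 0 ≤ a) (hN : 0 ≤ N) (hN1 : N ≤ 1)
    (h : ∀ l, 0 < l → l ≤ 1 → B ≤ a * l ^ p + b * l ^ (2 - p) * N) :
    B ≤ (a + b) * N ^ r := by
  have hp0 : 0 < p := by linarith
  rcases hN.eq_or_lt with rfl | hN
  · exact (nonpos_of_forall_le_mul_rpow hp0 (by simpa using h)).trans (by positivity)
  have hexp : r ≤ r / p * (2 - p) + 1 := by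
    field_simp
    linarith
  -- `l = N ^ (r / p)` turns the first term into `a * N ^ r`.
  calc B ≤ a * (N ^ (r / p)) ^ p + b * (N ^ (r / p)) ^ (2 - p) * N :=
        h _ (by positivity) (Real.rpow_le_one hN.le hN1 (by positivity))
    _ = a * N ^ r + b * N ^ (r / p * (2 - p) + 1) := by
        rw [← Real.rpow_mul hN.le, ← Real.rpow_mul hN.le, Real.rpow_add_one hN.ne',
          div_mul_cancel₀ r hp0.ne', mul_assoc b]
    _ ≤ a * N ^ r + b * N ^ r := by
        gcongr _ + b * ?_
        exact Real.rpow_le_rpow_of_exponent_ge hN hN1 hexp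
    _ = (a + b) * N ^ r := by ring

lemma add_one_div_two_mul_add_one_le_one (hp : 0 ≤ p) : (p + 1) / (2 * p + 1) ≤ 1 := by
  rw [div_le_one (by linarith)]
  linarith

lemma add_one_div_two_mul_add_one_mul_le (hp : 0 ≤ p) :
    (p + 1) / (2 * p + 1) * (2 * p - 2) ≤ p := by
  rw [div_mul_eq_mul_div, div_le_iff₀ (by linarith)]
  linarith

end Optimisation

/-- A constant `K` with `E|M_n|^p ≤ K N^r` for the martingale part `M` of an increasing process,
where `N ≤ 1` bounds the sum of the `p`-th moments of the increments and of the `p`-th moment of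
the deviation of the predictable part from `1`. The first summand serves `p ≤ 2`, the others
serve `2 ≤ p`. -/
noncomputable def martingalePartConst (p : ℝ) : ℝ :=
  4 * p * 2 ^ p
    + ((4 * (p ^ 2 * 2 ^ (p - 2))) ^ p * 2 ^ p + 2 * (p ^ 2 * 2 ^ (p - 2) * 2 ^ p))

section NearlyDeterministicCompensator

variable {Ω : Type*} {m0 : MeasurableSpace Ω} {μ : Measure Ω} [IsProbabilityMeasure μ]
  {ℱ : Filtration ℕ m0} {f : ℕ → Ω → ℝ} {p r N : ℝ} {n : ℕ}

lemma integral_abs_rpow_le_two_rpow {g : Ω → ℝ} (hp : 1 ≤ p) (hg : MemLp g (ENNReal.ofReal p) μ)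
    (hg1 : ∫ ω, |g ω - 1| ^ p ∂μ ≤ 1) : ∫ ω, |g ω| ^ p ∂μ ≤ 2 ^ p := by
  have hadd := integral_abs_add_rpow_le_two_rpow_mul hp (hg.sub (memLp_const 1))
    (memLp_const (1 : ℝ))
  simp only [Pi.sub_apply, sub_add_cancel, abs_one, Real.one_rpow, integral_const,
    probReal_univ, smul_eq_mul, mul_one] at hadd
  calc ∫ ω, |g ω| ^ p ∂μ ≤ 2 ^ (p - 1) * (∫ ω, |g ω - 1| ^ p ∂μ + 1) := hadd
    _ ≤ 2 ^ (p - 1) * (1 + 1) := by gcongr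
    _ = 2 ^ p := by
        rw [one_add_one_eq_two, rpow_sub_one_mul_self (by linarith) two_pos.le]

lemma integral_abs_martingalePart_rpow_le (hp : 1 < p) (hr : 0 ≤ r) (hr1 : r ≤ 1)
    (hrp : r * (2 * p - 2) ≤ p) (hf : StronglyAdapted ℱ f)
    (hfp : ∀ k, MemLp (f k) (ENNReal.ofReal p) μ) (hf0 : f 0 = 0)
    (hmono : ∀ k, f k ≤ᵐ[μ] f (k + 1)) (hN1 : N ≤ 1)
    (hΔ : ∑ k ∈ range n, ∫ ω, |f (k + 1) ω - f k ω| ^ p ∂μ ≤ N)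
    (hA : ∫ ω, |predictablePart f ℱ μ n ω - 1| ^ p ∂μ ≤ N) :
    ∫ ω, |martingalePart f ℱ μ n ω| ^ p ∂μ ≤ martingalePartConst p * N ^ r := by
  have hN : 0 ≤ N := (integral_nonneg fun ω => by positivity).trans hA
  have hNr : N ≤ N ^ r := le_rpow_of_le_one hr hr1 hN hN1
  rw [martingalePartConst, add_mul]
  rcases le_total p 2 with hp2 | hp2
  · refine le_add_of_le_of_nonneg ?_ (by positivity)
    grw [integral_abs_martingalePart_rpow_le_of_le_two hp hp2 hf hfp hf0 n, hΔ, hNr]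
  · refine le_add_of_nonneg_of_le (by positivity) ?_
    refine le_add_mul_rpow_of_forall_le hp2 (by positivity) hr hrp (by positivity) hN hN1
      fun l hl hl1 => ?_
    have hAp := integral_abs_rpow_le_two_rpow hp.le
      (memLp_predictablePart (by simpa using hp.le) hfp n) (hA.trans hN1)
    grw [integral_abs_martingalePart_rpow_le_of_two_le hp2 hl hl1 hf hfp hf0 hmono n, hAp, hΔ]

lemma integral_abs_sub_one_rpow_le (hp : 1 < p) (hr : 0 ≤ r) (hr1 : r ≤ 1)
    (hrp : r * (2 * p - 2) ≤ p) (hf : StronglyAdapted ℱ f)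
    (hfp : ∀ k, MemLp (f k) (ENNReal.ofReal p) μ) (hf0 : f 0 = 0)
    (hmono : ∀ k, f k ≤ᵐ[μ] f (k + 1)) (hN1 : N ≤ 1)
    (hΔ : ∑ k ∈ range n, ∫ ω, |f (k + 1) ω - f k ω| ^ p ∂μ ≤ N)
    (hA : ∫ ω, |predictablePart f ℱ μ n ω - 1| ^ p ∂μ ≤ N) :
    ∫ ω, |f n ω - 1| ^ p ∂μ ≤ 2 ^ (p - 1) * (martingalePartConst p + 1) * N ^ r := by
  have hq : 1 ≤ ENNReal.ofReal p := by simpa using hp.le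
  have hN : 0 ≤ N := (integral_nonneg fun ω => by positivity).trans hA
  have hNr : N ≤ N ^ r := le_rpow_of_le_one hr hr1 hN hN1
  have hsplit (ω : Ω) :
      f n ω - 1 = martingalePart f ℱ μ n ω + (predictablePart f ℱ μ n ω - 1) := by
    simp only [martingalePart, Pi.sub_apply]
    ring
  calc ∫ ω, |f n ω - 1| ^ p ∂μ
      ≤ 2 ^ (p - 1) * (∫ ω, |martingalePart f ℱ μ n ω| ^ p ∂μ
        + ∫ ω, |predictablePart f ℱ μ n ω - 1| ^ p ∂μ) := by
        simp only [hsplit]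
        exact integral_abs_add_rpow_le_two_rpow_mul hp.le (memLp_martingalePart hq hfp n)
          ((memLp_predictablePart hq hfp n).sub (memLp_const 1))
    _ ≤ 2 ^ (p - 1) * (martingalePartConst p * N ^ r + N ^ r) := by
        gcongr
        · exact integral_abs_martingalePart_rpow_le hp hr hr1 hrp hf hfp hf0 hmono hN1 hΔ hA
        · exact hA.trans hNr
    _ = 2 ^ (p - 1) * (martingalePartConst p + 1) * N ^ r := by ring

end NearlyDeterministicCompensator

/-- The squared variation `[S]_n` of the process `S` with increments `X_i`. -/
def squaredVariation {Ω : Type*} (X : ℕ → Ω → ℝ) (n : ℕ) : Ω → ℝ :=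
  fun ω => ∑ i ∈ Icc 1 n, X i ω ^ 2

/-- The conditional variance `⟨S⟩_n` of the process `S` with increments `X_i`. -/
noncomputable def conditionalVariance {Ω : Type*} {m0 : MeasurableSpace Ω} (X : ℕ → Ω → ℝ)
    (ℱ : Filtration ℕ m0) (μ : Measure Ω) (n : ℕ) : Ω → ℝ :=
  fun ω => ∑ i ∈ Icc 1 n, μ[fun ω' => X i ω' ^ 2 | ℱ (i - 1)] ω

section SquaredVariation

variable {Ω : Type*} {m0 : MeasurableSpace Ω} {μ : Measure Ω} {ℱ : Filtration ℕ m0}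
  {X : ℕ → Ω → ℝ} {p r N : ℝ} {n : ℕ}

lemma squaredVariation_zero : squaredVariation X 0 = 0 := by
  ext ω
  simp [squaredVariation]

lemma squaredVariation_mono : Monotone (squaredVariation X) := fun _ _ hkl _ =>
  sum_le_sum_of_subset_of_nonneg (Icc_subset_Icc_right hkl) fun _ _ _ => sq_nonneg _

lemma squaredVariation_min_add_one_sub {k : ℕ} (hk : k < n) :
    squaredVariation X (min (k + 1) n) - squaredVariation X (min k n)
      = fun ω => X (k + 1) ω ^ 2 := by
  ext ω
  simp [squaredVariation, min_eq_left hk.le, min_eq_left (Nat.succ_le_of_lt hk), sum_Icc_succ_top]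

lemma abs_sq_rpow (x p : ℝ) : |x ^ 2| ^ p = |x| ^ (2 * p) := by
  rw [abs_pow, ← Real.rpow_natCast, ← Real.rpow_mul (abs_nonneg x), Nat.cast_ofNat]

lemma memLp_sq_of_integrable_abs_rpow {g : Ω → ℝ} (hp : 0 < p) (hg : AEStronglyMeasurable g μ)
    (hint : Integrable (fun ω => |g ω| ^ (2 * p)) μ) :
    MemLp (fun ω => g ω ^ 2) (ENNReal.ofReal p) μ := by
  have hsq : AEStronglyMeasurable (fun ω => g ω ^ 2) μ := hg.pow 2
  rw [← integrable_norm_rpow_iff hsq (by simpa using hp) ENNReal.ofReal_ne_top]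
  simpa only [ENNReal.toReal_ofReal hp.le, Real.norm_eq_abs, abs_sq_rpow] using hint

lemma memLp_squaredVariation (hp : 0 < p) (hX : ∀ i ∈ Icc 1 n, AEStronglyMeasurable (X i) μ)
    (hint : ∀ i ∈ Icc 1 n, Integrable (fun ω => |X i ω| ^ (2 * p)) μ) :
    MemLp (squaredVariation X n) (ENNReal.ofReal p) μ :=
  memLp_finsetSum _ fun i hi => memLp_sq_of_integrable_abs_rpow hp (hX i hi) (hint i hi)

lemma stronglyAdapted_squaredVariation (hX : StronglyAdapted ℱ X) :
    StronglyAdapted ℱ (squaredVariation X) := fun _ =>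
  Finset.stronglyMeasurable_fun_sum _ fun i hi =>
    ((hX i).mono (ℱ.mono (mem_Icc.mp hi).2)).pow 2

lemma sum_range_add_one_eq_sum_Icc {E : Type*} [AddCommMonoid E] (g : ℕ → E) (n : ℕ) :
    ∑ k ∈ range n, g (k + 1) = ∑ i ∈ Icc 1 n, g i := by
  rw [range_eq_Ico, sum_Ico_add' g 0 n 1]
  rfl

lemma sum_integral_abs_squaredVariation_increment_rpow :
    ∑ k ∈ range n, ∫ ω, |squaredVariation X (min (k + 1) n) ω
        - squaredVariation X (min k n) ω| ^ p ∂μ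
      = ∑ i ∈ Icc 1 n, ∫ ω, |X i ω| ^ (2 * p) ∂μ := by
  rw [← sum_range_add_one_eq_sum_Icc]
  refine sum_congr rfl fun k hk => ?_
  simp only [← Pi.sub_apply, squaredVariation_min_add_one_sub (mem_range.mp hk), abs_sq_rpow]

lemma predictablePart_squaredVariation :
    predictablePart (fun k => squaredVariation X (min k n)) ℱ μ n
      = conditionalVariance X ℱ μ n := by
  ext ω
  rw [predictablePart, conditionalVariance, Finset.sum_apply, ← sum_range_add_one_eq_sum_Icc]
  refine sum_congr rfl fun k hk => ?_
  rw [squaredVariation_min_add_one_sub (mem_range.mp hk), Nat.add_sub_cancel]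

/- The process is stopped at time `n`, since no moment of the later increments need be finite. -/
lemma integral_abs_squaredVariation_sub_one_rpow_le [IsProbabilityMeasure μ] (hp : 1 < p)
    (hr : 0 ≤ r) (hr1 : r ≤ 1) (hrp : r * (2 * p - 2) ≤ p) (hX : StronglyAdapted ℱ X)
    (hint : ∀ i ∈ Icc 1 n, Integrable (fun ω => |X i ω| ^ (2 * p)) μ)
    (hN : ∑ i ∈ Icc 1 n, ∫ ω, |X i ω| ^ (2 * p) ∂μ
      + ∫ ω, |conditionalVariance X ℱ μ n ω - 1| ^ p ∂μ ≤ N) (hN1 : N ≤ 1) :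
    ∫ ω, |squaredVariation X n ω - 1| ^ p ∂μ
      ≤ 2 ^ (p - 1) * (martingalePartConst p + 1) * N ^ r := by
  have hsum : 0 ≤ ∑ i ∈ Icc 1 n, ∫ ω, |X i ω| ^ (2 * p) ∂μ :=
    sum_nonneg fun i _ => integral_nonneg fun ω => by positivity
  have hdev : 0 ≤ ∫ ω, |conditionalVariance X ℱ μ n ω - 1| ^ p ∂μ :=
    integral_nonneg fun ω => by positivity
  have hLp (k : ℕ) : MemLp (squaredVariation X (min k n)) (ENNReal.ofReal p) μ := by
    have hsub : Icc 1 (min k n) ⊆ Icc 1 n := Icc_subset_Icc_right (min_le_right k n)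
    exact memLp_squaredVariation (by linarith)
      (fun i _ => ((hX i).mono (ℱ.le i)).aestronglyMeasurable) fun i hi => hint i (hsub hi)
  have hadapted : StronglyAdapted ℱ fun k => squaredVariation X (min k n) := fun k =>
    (stronglyAdapted_squaredVariation hX _).mono (ℱ.mono (min_le_left k n))
  have hmono (k : ℕ) : squaredVariation X (min k n) ≤ᵐ[μ] squaredVariation X (min (k + 1) n) :=
    .of_forall (squaredVariation_mono (min_le_min_right n k.le_succ))
  have hbound := integral_abs_sub_one_rpow_le (n := n) hp hr hr1 hrp hadapted hLp
    (by simpa using squaredVariation_zero) hmono hN1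
    (by rw [sum_integral_abs_squaredVariation_increment_rpow]; linarith)
    (by rw [predictablePart_squaredVariation]; linarith)
  simpa only [min_self] using hbound

lemma measureReal_le_abs_squaredVariation_sub_one_le [IsProbabilityMeasure μ] {ε : ℝ} (hp : 1 < p)
    (hr : 0 ≤ r) (hr1 : r ≤ 1) (hrp : r * (2 * p - 2) ≤ p) (hX : StronglyAdapted ℱ X)
    (hint : ∀ i ∈ Icc 1 n, Integrable (fun ω => |X i ω| ^ (2 * p)) μ)
    (hN : ∑ i ∈ Icc 1 n, ∫ ω, |X i ω| ^ (2 * p) ∂μ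
      + ∫ ω, |conditionalVariance X ℱ μ n ω - 1| ^ p ∂μ ≤ N) (hN1 : N ≤ 1) (hε : 0 < ε) :
    μ.real {ω | ε ≤ |squaredVariation X n ω - 1|}
      ≤ 2 ^ (p - 1) * (martingalePartConst p + 1) * ε ^ (-p) * N ^ r := by
  have hp0 : 0 < p := by linarith
  have hLp : MemLp (squaredVariation X n - fun _ => 1) (ENNReal.ofReal p) μ :=
    (memLp_squaredVariation hp0
      (fun i _ => ((hX i).mono (ℱ.le i)).aestronglyMeasurable) hint).sub (memLp_const 1)
  calc μ.real {ω | ε ≤ |squaredVariation X n ω - 1|}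
      ≤ ε ^ (-p) * ∫ ω, |squaredVariation X n ω - 1| ^ p ∂μ :=
        measureReal_le_abs_le_rpow_neg_mul_integral hp0 hε hLp
    _ ≤ ε ^ (-p) * (2 ^ (p - 1) * (martingalePartConst p + 1) * N ^ r) := by
        gcongr
        exact integral_abs_squaredVariation_sub_one_rpow_le hp hr hr1 hrp hX hint hN hN1
    _ = 2 ^ (p - 1) * (martingalePartConst p + 1) * ε ^ (-p) * N ^ r := by ring

end SquaredVariation

/- Since `N ≤ 1`, the best admissible exponent is `r = min 1 (p / (2 * p - 2))`. -/
theorem stmt15_general {p : ℝ} (hp : 1 < p) :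
    ∃ C : ℝ, 0 < C ∧
      ∀ {Ω : Type*} {mΩ : MeasurableSpace Ω} (μ : Measure Ω) [IsProbabilityMeasure μ]
        (ℱ : Filtration ℕ mΩ) (n : ℕ) (X : ℕ → Ω → ℝ), StronglyAdapted ℱ X →
        (∀ i ∈ Icc 1 n, Integrable (fun ω => |X i ω| ^ (2 * p)) μ) →
        ∀ N, ∑ i ∈ Icc 1 n, ∫ ω, |X i ω| ^ (2 * p) ∂μ
          + ∫ ω, |conditionalVariance X ℱ μ n ω - 1| ^ p ∂μ ≤ N → N ≤ 1 →
        ∀ r, 0 ≤ r → r ≤ 1 → r * (2 * p - 2) ≤ p → ∀ ε, 0 < ε →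
          μ.real {ω | ε ≤ |squaredVariation X n ω - 1|} ≤ C * ε ^ (-p) * N ^ r := by
  have : 0 < p := by linarith
  refine ⟨2 ^ (p - 1) * (martingalePartConst p + 1), ?_, ?_⟩
  · unfold martingalePartConst
    positivity
  · intro Ω mΩ μ _ ℱ n X hX hint N hN hN1 r hr hr1 hrp ε hε
    exact measureReal_le_abs_squaredVariation_sub_one_le hp hr hr1 hrp hX hint hN hN1 hε

theorem stmt15 (p : ℝ) (hp : 1 < p) :
    ∃ C : ℝ, 0 < C ∧
      ∀ (Ω : Type) (mΩ : MeasurableSpace Ω) (μ : Measure Ω),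
        IsProbabilityMeasure μ →
        ∀ (ℱ : Filtration ℕ mΩ), ℱ 0 = ⊥ →
        ∀ (n : ℕ) (X : ℕ → Ω → ℝ), X 0 = 0 →
        (∀ i, StronglyMeasurable[ℱ i] (X i)) →
        (∀ i, Integrable (X i) μ) →
        (∀ i ∈ Finset.Icc 1 n, μ[X i | ℱ (i - 1)] =ᵐ[μ] (0 : Ω → ℝ)) →
        ∀ (S : ℕ → Ω → ℝ), (∀ k ω, S k ω = ∑ i ∈ Finset.Icc 1 k, X i ω) →
        ∀ (QV CV : Ω → ℝ),
          (∀ ω, QV ω = ∑ i ∈ Finset.Icc 1 n, (X i ω) ^ 2) →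
          (∀ ω, CV ω = ∑ i ∈ Finset.Icc 1 n, (μ[fun ω' => (X i ω') ^ 2 | ℱ (i - 1)]) ω) →
        (∫ ω, (S n ω) ^ 2 ∂μ) = 1 →
        (∀ i ∈ Finset.Icc 1 n, Integrable (fun ω => |X i ω| ^ (2 * p)) μ) →
        ∀ (N : ℝ),
          N = (∑ i ∈ Finset.Icc 1 n, ∫ ω, |X i ω| ^ (2 * p) ∂μ) + (∫ ω, |CV ω - 1| ^ p ∂μ) →
      N ≤ 1 →
      ∀ ε : ℝ, 0 < ε →
        (μ {ω | ε ≤ |QV ω - 1|}).toReal ≤ C * ε ^ (-p) * N ^ ((p + 1) / (2 * p + 1)) := by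
  have hp0 : 0 ≤ p := by linarith
  obtain ⟨C, hC, hbound⟩ := stmt15_general hp
  refine ⟨C, hC, fun Ω mΩ μ _ ℱ _ n X _ hX _ _ S _ QV CV hQV hCV _ hint N hN hN1 ε hε => ?_⟩
  obtain rfl : QV = squaredVariation X n := funext hQV
  obtain rfl : CV = conditionalVariance X ℱ μ n := funext hCV
  exact hbound μ ℱ n X hX hint N hN.ge hN1 _ (by positivity)
    (add_one_div_two_mul_add_one_le_one hp0) (add_one_div_two_mul_add_one_mul_le hp0) ε hε
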